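/- Let x be a surface patch with a rounded corner at (0,0), with limit normal n and cross components ρ = ⟨c, r⟩, σ = ⟨c, s⟩ (c = n × t). Then there exist constants C > 0 and H' ∈ (0,H] such that for all (u,v) ∈ [0,H']², ‖x_u(u,v) × x_v(u,v) − (ρu + σv) n‖ ≤ C · (max{u,v})². -/

import Mathlib

/-!
Write `f = x_u × x_v`. Since `x` is `C³`, `f` is `C²`, so it differs from its first-order Taylor
polynomial at the origin by a quadratic error (`exists_norm_sub_linear_le_sq`, for the sup norm on
`ℝ × ℝ`, which is `max u v` on the quadrant). It remains to identify that polynomial. Its constant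
term vanishes because `x_u` and `x_v` are antiparallel at the corner. By the product rule and the
symmetry of second derivatives, its linear term at `(u, v)` is
`(λ t) × (u ξ₁₁ + v ξ₀₂) + (u ξ₂₀ + v ξ₁₁) × (-μ t) = u (t × r) + v (t × s)`.
Here `t × r = ‖t × r‖ n = ρ n` because `ρ = ⟨n × t, r⟩ = ⟨n, t × r⟩`, and likewise
`σ = ⟨n, t × s⟩`; coplanarity makes `t × s` a multiple of `t × r`, hence of `n`, so `t × s = σ n`
(`cross3_eq_smul_of_coplanar`).
-/

open scoped RealInnerProductSpace

noncomputable section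

/-- ℝ³ with the Euclidean inner product and norm. -/
abbrev E3 : Type := EuclideanSpace ℝ (Fin 3)

/-- The cross product on Euclidean ℝ³. -/
def cross3 (a b : E3) : E3 :=
  (WithLp.equiv 2 (Fin 3 → ℝ)).symm
    (crossProduct ((WithLp.equiv 2 (Fin 3 → ℝ)) a) ((WithLp.equiv 2 (Fin 3 → ℝ)) b))

/-- Partial derivative with respect to the first variable. -/
def pd1 (x : ℝ × ℝ → E3) (p : ℝ × ℝ) : E3 := fderiv ℝ x p (1, 0)

/-- Partial derivative with respect to the second variable. -/
def pd2 (x : ℝ × ℝ → E3) (p : ℝ × ℝ) : E3 := fderiv ℝ x p (0, 1)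

lemma cross3_apply_zero (a b : E3) : cross3 a b 0 = a 1 * b 2 - a 2 * b 1 := by
  simp [cross3, crossProduct]

lemma cross3_apply_one (a b : E3) : cross3 a b 1 = a 2 * b 0 - a 0 * b 2 := by
  simp [cross3, crossProduct]

lemma cross3_apply_two (a b : E3) : cross3 a b 2 = a 0 * b 1 - a 1 * b 0 := by
  simp [cross3, crossProduct]

lemma isBilinearMap_cross3 : IsBilinearMap ℝ cross3 where
  add_left a b c := by simp [cross3]
  smul_left k a b := by simp [cross3]
  add_right a b c := by simp [cross3]
  smul_right k a b := by simp [cross3]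

/-- The cross product on `E3` as a continuous bilinear map. -/
def cross3L : E3 →L[ℝ] E3 →L[ℝ] E3 := isBilinearMap_cross3.toContinuousBilinearMap

lemma cross3L_apply (a b : E3) : cross3L a b = cross3 a b := rfl

lemma cross3_self (a : E3) : cross3 a a = 0 := by simp [cross3]

lemma cross3_anticomm (a b : E3) : cross3 a b = -cross3 b a := by
  ext i
  fin_cases i <;> simp [cross3_apply_zero, cross3_apply_one, cross3_apply_two] <;> ring

lemma inner_cross3_left (n t w : E3) : ⟪cross3 n t, w⟫ = ⟪n, cross3 t w⟫ := by
  simp only [PiLp.inner_apply, Fin.sum_univ_three, cross3_apply_zero, cross3_apply_one,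
    cross3_apply_two, RCLike.inner_apply, conj_trivial]
  ring

/-- If `r`, `s`, `t` are coplanar and `t × r ≠ 0`, then `t × s` is a multiple of `t × r`. -/
lemma cross3_eq_smul_of_coplanar {r s t : E3} (hcop : ¬ LinearIndependent ℝ ![r, s, t])
    (hr : cross3 t r ≠ 0) : ∃ k : ℝ, cross3 t s = k • cross3 t r := by
  have ht : t ≠ 0 := by
    rintro rfl
    exact hr (by rw [← cross3L_apply]; simp)
  rw [Fintype.not_linearIndependent_iff] at hcop
  obtain ⟨g, hg, hne⟩ := hcop
  simp only [Fin.sum_univ_three, Matrix.cons_val] at hg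
  have hcross : g 0 • cross3 t r + g 1 • cross3 t s = 0 := by
    have := congrArg (cross3L t) hg
    simp only [map_add, map_smul, map_zero] at this
    simpa only [cross3L_apply, cross3_self, smul_zero, add_zero] using this
  have h1 : g 1 ≠ 0 := by
    intro h1
    have h0 : g 0 = 0 := by simpa [h1, hr] using hcross
    have h2 : g 2 = 0 := by simpa [h0, h1, ht] using hg
    obtain ⟨i, hi⟩ := hne
    fin_cases i
    exacts [hi h0, hi h1, hi h2]
  refine ⟨-(g 0 / g 1), ?_⟩
  have h : g 1 • cross3 t s = -(g 0 • cross3 t r) := by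
    rw [eq_neg_iff_add_eq_zero, add_comm]
    exact hcross
  calc cross3 t s = (g 1)⁻¹ • (g 1 • cross3 t s) := by rw [inv_smul_smul₀ h1]
    _ = -(g 0 / g 1) • cross3 t r := by
      rw [h, smul_neg, smul_smul, neg_smul, div_eq_inv_mul]

/-- Taylor's theorem of order one with a quadratic error bound, uniform on a ball: the derivative
of a `C²` map is Lipschitz there, and the bound follows from the mean value inequality. -/
lemma exists_norm_sub_linear_le_sq {f : ℝ × ℝ → E3} (hf : ContDiff ℝ 2 f) (R : ℝ) :
    ∃ K : ℝ, 0 ≤ K ∧ ∀ p : ℝ × ℝ, ‖p‖ ≤ R →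
      ‖f p - f 0 - fderiv ℝ f 0 p‖ ≤ K * ‖p‖ ^ 2 := by
  have hf' : ContDiff ℝ 1 (fderiv ℝ f) := hf.fderiv_right (by norm_num)
  obtain ⟨K, hK⟩ := hf'.contDiffOn.exists_lipschitzOnWith one_ne_zero
    (convex_closedBall (0 : ℝ × ℝ) R) (isCompact_closedBall 0 R)
  refine ⟨K, K.2, fun p hp => ?_⟩
  have hbound : ∀ q ∈ Metric.closedBall (0 : ℝ × ℝ) ‖p‖,
      ‖fderiv ℝ f q - fderiv ℝ f 0‖ ≤ K * ‖p‖ := by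
    intro q hq
    have hq : ‖q‖ ≤ ‖p‖ := by simpa using hq
    have h := hK.norm_sub_le (x := q) (y := 0) (by simpa using hq.trans hp)
      (by simpa using (norm_nonneg p).trans hp)
    rw [sub_zero] at h
    exact h.trans (by gcongr)
  have h := (convex_closedBall (0 : ℝ × ℝ) ‖p‖).norm_image_sub_le_of_norm_hasFDerivWithin_le'
    (fun q _ => ((hf.differentiable (by norm_num)) q).hasFDerivAt.hasFDerivWithinAt) hbound
    (x := 0) (y := p) (by simp) (by simp)
  simpa [pow_two, mul_assoc] using h

lemma contDiff_pd1 {x : ℝ × ℝ → E3} (hx : ContDiff ℝ 3 x) : ContDiff ℝ 2 (pd1 x) :=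
  (hx.fderiv_right (m := 2) (by norm_num)).clm_apply contDiff_const

lemma contDiff_pd2 {x : ℝ × ℝ → E3} (hx : ContDiff ℝ 3 x) : ContDiff ℝ 2 (pd2 x) :=
  (hx.fderiv_right (m := 2) (by norm_num)).clm_apply contDiff_const

/-- Symmetry of the mixed second partial derivatives. -/
lemma pd1_pd2 {x : ℝ × ℝ → E3} (hx : ContDiff ℝ 3 x) (p : ℝ × ℝ) :
    pd1 (pd2 x) p = pd2 (pd1 x) p := by
  have hd : DifferentiableAt ℝ (fderiv ℝ x) p :=
    (hx.fderiv_right (m := 2) (by norm_num)).differentiable (by norm_num) p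
  have hsymm : IsSymmSndFDerivAt ℝ x p :=
    hx.contDiffAt.isSymmSndFDerivAt (by simp; norm_num)
  have key : ∀ w w' : ℝ × ℝ,
      fderiv ℝ (fun q => fderiv ℝ x q w) p w' = fderiv ℝ (fderiv ℝ x) p w' w := by
    intro w w'
    rw [fderiv_clm_apply hd (differentiableAt_const w)]
    simp
  exact (key _ _).trans ((hsymm _ _).trans (key _ _).symm)

lemma fderiv_apply_eq_pd (g : ℝ × ℝ → E3) (p : ℝ × ℝ) (u v : ℝ) :
    fderiv ℝ g p (u, v) = u • pd1 g p + v • pd2 g p := by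
  have : ((u, v) : ℝ × ℝ) = u • (1, 0) + v • (0, 1) := by simp
  rw [this, map_add, map_smul, map_smul]
  rfl

/-- **Taylor expansion of the cross product at a rounded corner.**
If `x` has a rounded corner at `(0,0)` with limit normal `n` and cross
components `ρ = ⟨c, r⟩`, `σ = ⟨c, s⟩` (where `c = n × t`), then
`x_u × x_v = (ρu + σv) n + O((max{u,v})²)` near the corner. -/
theorem rounded_corner_cross_expansion
    (H : ℝ) (hH : 0 < H) (x : ℝ × ℝ → E3) (hx : ContDiff ℝ 3 x)
    (t : E3) (ht : ‖t‖ = 1) (lam mu : ℝ) (hlam : 0 < lam) (hmu : 0 < mu)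
    (hxi10 : pd1 x (0, 0) = lam • t)
    (hxi01 : pd2 x (0, 0) = -(mu • t))
    (r s : E3)
    (hr : r = mu • pd1 (pd1 x) (0, 0) + lam • pd2 (pd1 x) (0, 0))
    (hs : s = lam • pd2 (pd2 x) (0, 0) + mu • pd2 (pd1 x) (0, 0))
    (hcop : ¬ LinearIndependent ℝ ![r, s, t])
    (hone : 0 < ⟪cross3 t r, cross3 t s⟫)
    (n : E3) (hn : n = ‖cross3 t r‖⁻¹ • cross3 t r)
    (c : E3) (hc : c = cross3 n t)
    (ρ σ : ℝ) (hρ : ρ = ⟪c, r⟫) (hσ : σ = ⟪c, s⟫) :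
    ∃ C : ℝ, 0 < C ∧ ∃ H' : ℝ, H' ∈ Set.Ioc 0 H ∧
      ∀ u v : ℝ, u ∈ Set.Icc (0 : ℝ) H' → v ∈ Set.Icc (0 : ℝ) H' →
        ‖cross3 (pd1 x (u, v)) (pd2 x (u, v)) - (ρ * u + σ * v) • n‖
          ≤ C * (max u v) ^ 2 := by
  have hne : cross3 t r ≠ 0 := by
    intro h
    simp [h] at hone
  have hnorm : ‖cross3 t r‖ ≠ 0 := norm_ne_zero_iff.mpr hne
  obtain ⟨k, hk⟩ := cross3_eq_smul_of_coplanar hcop hne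
  have hρ' : ρ = ‖cross3 t r‖ := by
    rw [hρ, hc, inner_cross3_left, hn, real_inner_smul_left, real_inner_self_eq_norm_sq]
    field_simp
  have hσ' : σ = k * ‖cross3 t r‖ := by
    rw [hσ, hc, inner_cross3_left, hk, hn, real_inner_smul_left, real_inner_smul_right,
      real_inner_self_eq_norm_sq]
    field_simp
  have hρn : ρ • n = cross3 t r := by
    rw [hρ', hn, smul_inv_smul₀ hnorm]
  have hσn : σ • n = cross3 t s := by
    rw [hσ', hn, mul_smul, smul_inv_smul₀ hnorm, hk]
  have h1 := contDiff_pd1 hx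
  have h2 := contDiff_pd2 hx
  set f : ℝ × ℝ → E3 := fun p => cross3L (pd1 x p) (pd2 x p) with hf_def
  have hf : ContDiff ℝ 2 f := (cross3L.contDiff.comp h1).clm_apply h2
  have hf0 : f 0 = 0 := by
    simp only [hf_def, ← Prod.mk_zero_zero, hxi10, hxi01]
    simp only [map_smul, map_neg, smul_apply, cross3L_apply, cross3_self, smul_zero, neg_zero]
  have hlin : ∀ u v : ℝ, fderiv ℝ f 0 (u, v) = (ρ * u + σ * v) • n := by
    intro u v
    have hd := cross3L.hasFDerivAt_of_bilinear
      ((h1.differentiable (by norm_num)) (0, 0)).hasFDerivAt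
      ((h2.differentiable (by norm_num)) (0, 0)).hasFDerivAt
    have hL : fderiv ℝ f 0 (u, v) =
        cross3L (pd1 x (0, 0)) (fderiv ℝ (pd2 x) (0, 0) (u, v)) +
          cross3L (fderiv ℝ (pd1 x) (0, 0) (u, v)) (pd2 x (0, 0)) :=
      congrArg (fun L : ℝ × ℝ →L[ℝ] E3 => L (u, v)) hd.fderiv
    have hR : (ρ * u + σ * v) • n = u • cross3 t r + v • cross3 t s := by
      rw [← hρn, ← hσn]
      module
    rw [hL, hR, hr, hs]
    simp only [fderiv_apply_eq_pd, pd1_pd2 hx, hxi10, hxi01, ← cross3L_apply, map_add, map_smul, map_neg,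
      smul_apply, add_apply]
    -- The factor `-μ t` stands on the right; anticommutativity brings `t` to the left.
    have hanti : ∀ w : E3, cross3L w t = -cross3L t w := fun w => cross3_anticomm w t
    simp only [hanti]
    module
  obtain ⟨K, hK0, hK⟩ := exists_norm_sub_linear_le_sq hf H
  refine ⟨K + 1, by positivity, H, ⟨hH, le_rfl⟩, fun u v hu hv => ?_⟩
  have hp : ‖((u, v) : ℝ × ℝ)‖ = max u v := by
    rw [Prod.norm_mk, Real.norm_of_nonneg hu.1, Real.norm_of_nonneg hv.1]
  have h := hK (u, v) (by rw [hp]; exact max_le hu.2 hv.2)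
  rw [hf0, sub_zero, hlin, hp] at h
  exact h.trans (by gcongr; linarith)
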